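/- Let r ≥ 1 and let (α_1, β_1), ..., (α_r, β_r) be pairs of real numbers with 0 ≤ α_j, β_j ≤ 1 and α_j + β_j = 1 for each j. Let θ_1 be a real number with inf_{q ∈ ℤ_{>0}} q‖qθ_1‖ > 0. Then the set ⋂_{j=1}^r { θ_2 ∈ [0,1] : there exists δ > 0 such that for every positive integer p, max( p^{α_j} ‖pθ_1‖, p^{β_j} ‖pθ_2‖ ) ≥ δ } has Hausdorff dimension equal to 1. -/

import Mathlib

open Filter

/-- Distance from a real number to the nearest integer. -/
noncomputable def nint (x : ℝ) : ℝ := |x - round x|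

/-- The `a`-th closed `R`-adic interval of level `n`. -/
def cell (R n a : ℕ) : Set ℝ := Set.Icc ((a : ℝ) / (R : ℝ) ^ n) (((a : ℝ) + 1) / (R : ℝ) ^ n)

open Classical in
/-- Indices of the level-`n` cells all of whose ancestors (itself included) of level `m + 1`
are disjoint from `X m`. -/
noncomputable def survivors (R : ℕ) (X : ℕ → Set ℝ) : ℕ → Finset ℕ
  | 0 => {0}
  | n + 1 => (Finset.range (R ^ (n + 1))).filter
      fun b => b / R ∈ survivors R X n ∧ Disjoint (cell R (n + 1) b) (X n)

lemma mem_survivors_succ {R : ℕ} {X : ℕ → Set ℝ} {n b : ℕ} :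
    b ∈ survivors R X (n + 1) ↔
      b < R ^ (n + 1) ∧ b / R ∈ survivors R X n ∧ Disjoint (cell R (n + 1) b) (X n) := by
  simp [survivors]

lemma lt_of_mem_survivors {R : ℕ} {X : ℕ → Set ℝ} {n a : ℕ} (h : a ∈ survivors R X n) :
    a < R ^ n := by
  cases n with
  | zero => simp [survivors] at h; simp [h]
  | succ n => exact (mem_survivors_succ.1 h).1

lemma cell_add_subset {R : ℕ} (hR : 0 < R) (n k b : ℕ) :
    cell R (n + k) b ⊆ cell R n (b / R ^ k) := by
  have hRk : 0 < R ^ k := by positivity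
  have h1 : (R ^ k) * (b / R ^ k) ≤ b := Nat.mul_div_le b _
  have h2 : b + 1 ≤ (R ^ k) * (b / R ^ k + 1) := Nat.lt_mul_div_succ b hRk
  have h1' : ((R : ℝ) ^ k) * ((b / R ^ k : ℕ) : ℝ) ≤ b := by exact_mod_cast h1
  have h2' : (b : ℝ) + 1 ≤ ((R : ℝ) ^ k) * (((b / R ^ k : ℕ) : ℝ) + 1) := by exact_mod_cast h2
  have hR' : (0 : ℝ) < R := by exact_mod_cast hR
  apply Set.Icc_subset_Icc
  · rw [div_le_div_iff₀ (by positivity) (by positivity), pow_add]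
    nlinarith [pow_pos hR' n]
  · rw [div_le_div_iff₀ (by positivity) (by positivity), pow_add]
    nlinarith [pow_pos hR' n]

lemma div_pow_mem_survivors {R : ℕ} {X : ℕ → Set ℝ} {n k b : ℕ}
    (h : b ∈ survivors R X (n + k)) : b / R ^ k ∈ survivors R X n := by
  induction k generalizing b with
  | zero => simpa using h
  | succ k ih =>
    have := ih (mem_survivors_succ.1 h).2.1
    rwa [Nat.div_div_eq_div_mul, ← pow_succ'] at this

lemma disjoint_cell_of_mem_survivors {R : ℕ} (hR : 0 < R) {X : ℕ → Set ℝ} {n m a : ℕ}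
    (h : a ∈ survivors R X n) (hm : m < n) : Disjoint (cell R n a) (X m) := by
  obtain ⟨k, rfl⟩ := Nat.exists_eq_add_of_lt hm
  rw [add_right_comm] at h ⊢
  exact (mem_survivors_succ.1 (div_pow_mem_survivors h)).2.2.mono_left
    (cell_add_subset hR _ _ _)

lemma card_le_four_of_cell_near {R : ℕ} (hR : 0 < R) (m : ℕ) (z : ℝ) (S : Finset ℕ)
    (hS : ∀ b ∈ S, ∃ y ∈ cell R m b, |y - z| ≤ 1 / (R : ℝ) ^ m) : S.card ≤ 4 := by
  have hR' : (0 : ℝ) < (R : ℝ) ^ m := by positivity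
  have key : ∀ b ∈ S, z * (R : ℝ) ^ m - 2 ≤ b ∧ (b : ℝ) ≤ z * (R : ℝ) ^ m + 1 := by
    intro b hb
    obtain ⟨y, hy, hyz⟩ := hS b hb
    rw [cell, Set.mem_Icc, div_le_iff₀ hR', le_div_iff₀ hR'] at hy
    rw [abs_le, neg_le, div_eq_mul_inv] at hyz
    have e : (R : ℝ) ^ m * ((R : ℝ) ^ m)⁻¹ = 1 := mul_inv_cancel₀ hR'.ne'
    constructor <;> nlinarith
  have hsub : S.map Nat.castEmbedding ⊆
      Finset.Icc ⌈z * (R : ℝ) ^ m - 2⌉ (⌈z * (R : ℝ) ^ m - 2⌉ + 3) := by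
    intro x hx
    obtain ⟨b, hb, rfl⟩ := Finset.mem_map.1 hx
    obtain ⟨h1, h2⟩ := key b hb
    simp only [Nat.castEmbedding_apply, Finset.mem_Icc]
    refine ⟨Int.ceil_le.2 (by exact_mod_cast h1), ?_⟩
    have := Int.le_ceil (z * (R : ℝ) ^ m - 2)
    have h3 : ((b : ℤ) : ℝ) ≤ ((⌈z * (R : ℝ) ^ m - 2⌉ + 3 : ℤ) : ℝ) := by push_cast; linarith
    exact_mod_cast h3
  have := Finset.card_le_card hsub
  rw [Finset.card_map, Int.card_Icc] at this
  omega

lemma card_le_of_cell_near_pair {R : ℕ} (hR : 0 < R) (m : ℕ) (z₁ z₂ : ℝ) (S : Finset ℕ)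
    (hS : ∀ b ∈ S, ∃ y ∈ cell R m b, |y - z₁| ≤ 1 / (R : ℝ) ^ m ∨ |y - z₂| ≤ 1 / (R : ℝ) ^ m) :
    S.card ≤ 8 := by
  classical
  have h1 := card_le_four_of_cell_near hR m z₁
    (S.filter fun b => ∃ y ∈ cell R m b, |y - z₁| ≤ 1 / (R : ℝ) ^ m)
    (fun b hb => (Finset.mem_filter.1 hb).2)
  have h2 := card_le_four_of_cell_near hR m z₂
    (S.filter fun b => ∃ y ∈ cell R m b, |y - z₂| ≤ 1 / (R : ℝ) ^ m)
    (fun b hb => (Finset.mem_filter.1 hb).2)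
  have h3 : S ⊆ (S.filter fun b => ∃ y ∈ cell R m b, |y - z₁| ≤ 1 / (R : ℝ) ^ m) ∪
      (S.filter fun b => ∃ y ∈ cell R m b, |y - z₂| ≤ 1 / (R : ℝ) ^ m) := by
    intro b hb
    obtain ⟨y, hy, h | h⟩ := hS b hb
    · exact Finset.mem_union_left _ (Finset.mem_filter.2 ⟨hb, y, hy, h⟩)
    · exact Finset.mem_union_right _ (Finset.mem_filter.2 ⟨hb, y, hy, h⟩)
  have := (Finset.card_le_card h3).trans (Finset.card_union_le _ _)
  omega

lemma exists_mem_forall_notMem {R : ℕ} (hR : 0 < R) {X : ℕ → Set ℝ}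
    (h : ∀ n, (survivors R X n).Nonempty) :
    ∃ y ∈ Set.Icc (0 : ℝ) 1, ∀ n, y ∉ X n := by
  let K : ℕ → Set ℝ := fun n => ⋃ a ∈ survivors R X n, cell R n a
  have hcomp : ∀ n, IsCompact (K n) := fun n =>
    (survivors R X n).isCompact_biUnion fun a _ => isCompact_Icc
  obtain ⟨y, hy⟩ := IsCompact.nonempty_iInter_of_sequence_nonempty_isCompact_isClosed K
    (by
      intro n y hy
      simp only [K, Set.mem_iUnion] at hy ⊢
      obtain ⟨b, hb, hyb⟩ := hy
      exact ⟨b / R ^ 1, div_pow_mem_survivors hb, cell_add_subset hR _ _ _ hyb⟩)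
    (by
      intro n
      obtain ⟨a, ha⟩ := h n
      refine ⟨(a : ℝ) / (R : ℝ) ^ n, Set.mem_biUnion ha ?_⟩
      refine Set.left_mem_Icc.2 ?_
      gcongr
      linarith)
    (hcomp 0) (fun n => (hcomp n).isClosed)
  rw [Set.mem_iInter] at hy
  refine ⟨y, ?_, fun n hyn => ?_⟩
  · simpa [K, survivors, cell] using hy 0
  · have := hy (n + 1)
    simp only [K, Set.mem_iUnion] at this
    obtain ⟨b, hb, hyb⟩ := this
    exact Set.disjoint_left.1 (mem_survivors_succ.1 hb).2.2 hyb hyn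

/-- The set removed at stage `n + 1` of the construction. -/
def removed {ι : Type*} (Z : ℕ → ℕ → ι → Set ℝ) (U : ℕ → Set ℝ) (lev : ℕ → ℕ) (n : ℕ) : Set ℝ :=
  {y | (∃ k ≤ n, ∃ l, y ∈ Z n k l) ∨ ∃ i, lev i = n ∧ y ∈ U i}

lemma mul_card_survivors_le {ι : Type*} [Fintype ι] {R : ℕ} (hR : 0 < R)
    (Z : ℕ → ℕ → ι → Set ℝ) (U : ℕ → Set ℝ) (lev : ℕ → ℕ)
    (hZ : ∀ n k l a, k ≤ n →
      (∀ m < n - k, ∀ k' ≤ m, ∀ l', Disjoint (cell R (n - k) a) (Z m k' l')) →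
      ∃ z₁ z₂ : ℝ, ∀ z ∈ Z n k l ∩ cell R (n - k) a,
        |z - z₁| ≤ 1 / (R : ℝ) ^ (n + 1) ∨ |z - z₂| ≤ 1 / (R : ℝ) ^ (n + 1))
    (hU : ∀ i, ∃ z : ℝ, ∀ y ∈ U i, |y - z| ≤ 1 / (R : ℝ) ^ (lev i + 1))
    (n : ℕ) (T : Finset ℕ) (hT : ∀ i, lev i = n → i ∈ T) :
    R * (survivors R (removed Z U lev) n).card ≤ (survivors R (removed Z U lev) (n + 1)).card +
      8 * Fintype.card ι *
        ∑ k ∈ Finset.range (n + 1), (survivors R (removed Z U lev) (n - k)).card +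
      4 * T.card := by
  classical
  set X := removed Z U lev with hX
  set V := survivors R X with hV
  let bad : ℕ × ι → Finset ℕ := fun x =>
    (Finset.range (R ^ (n + 1))).filter fun b => b / R ^ (x.1 + 1) ∈ V (n - x.1) ∧
      ¬ Disjoint (cell R (n + 1) b) (Z n x.1 x.2)
  let badU : ℕ → Finset ℕ := fun i =>
    (Finset.range (R ^ (n + 1))).filter fun b => lev i = n ∧ ¬ Disjoint (cell R (n + 1) b) (U i)
  let ch := (Finset.range (R ^ (n + 1))).filter fun b => b / R ∈ V n
  have hch : R * (V n).card ≤ ch.card := by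
    have e : (V n ×ˢ Finset.range R).card = R * (V n).card := by
      rw [Finset.card_product, Finset.card_range, mul_comm]
    rw [← e]
    refine Finset.card_le_card_of_injOn (fun x => x.1 * R + x.2) ?_ ?_
    · intro x hx
      simp only [Finset.coe_product, Set.mem_prod, Finset.mem_coe, Finset.mem_range] at hx
      have h1 := lt_of_mem_survivors hx.1
      simp only [ch, Finset.coe_filter, Finset.mem_range, Set.mem_ofPred_eq]
      refine ⟨?_, ?_⟩
      · rw [pow_succ]; nlinarith
      · rw [mul_comm, Nat.mul_add_div hR, Nat.div_eq_of_lt hx.2, add_zero]; exact hx.1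
    · intro x hx y hy hxy
      simp only [Finset.coe_product, Set.mem_prod, Finset.mem_coe, Finset.mem_range] at hx hy
      simp only at hxy
      have h1 : x.1 = y.1 := by
        have := congrArg (· / R) hxy
        simpa [mul_comm _ R, Nat.mul_add_div hR, Nat.div_eq_of_lt hx.2,
          Nat.div_eq_of_lt hy.2] using this
      refine Prod.ext h1 ?_
      rw [h1] at hxy; omega
  have hsub : ch ⊆ V (n + 1) ∪ ((Finset.range (n + 1) ×ˢ Finset.univ).biUnion bad ∪
      T.biUnion badU) := by
    intro b hb
    simp only [ch, Finset.mem_filter, Finset.mem_range] at hb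
    by_cases hd : Disjoint (cell R (n + 1) b) (X n)
    · exact Finset.mem_union_left _ (mem_survivors_succ.2 ⟨hb.1, hb.2, hd⟩)
    · refine Finset.mem_union_right _ ?_
      obtain ⟨y, hy, hyX⟩ := Set.not_disjoint_iff.1 hd
      rcases hyX with ⟨k, hk, l, hyZ⟩ | ⟨i, hi, hyU⟩
      · refine Finset.mem_union_left _ (Finset.mem_biUnion.2 ⟨(k, l), ?_, ?_⟩)
        · simp; omega
        · simp only [bad, Finset.mem_filter, Finset.mem_range]
          refine ⟨hb.1, ?_, Set.not_disjoint_iff.2 ⟨y, hy, hyZ⟩⟩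
          rw [pow_succ', ← Nat.div_div_eq_div_mul]
          apply div_pow_mem_survivors
          rw [Nat.sub_add_cancel hk]; exact hb.2
      · refine Finset.mem_union_right _ (Finset.mem_biUnion.2 ⟨i, hT i hi, ?_⟩)
        simp only [badU, Finset.mem_filter, Finset.mem_range]
        exact ⟨hb.1, hi, Set.not_disjoint_iff.2 ⟨y, hy, hyU⟩⟩
  have hbad : ∀ x ∈ Finset.range (n + 1) ×ˢ (Finset.univ : Finset ι),
      (bad x).card ≤ 8 * (V (n - x.1)).card := by
    rintro ⟨k, l⟩ hx
    simp only [Finset.mem_product, Finset.mem_range, Finset.mem_univ, and_true] at hx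
    rw [mul_comm]
    refine Finset.card_le_mul_card_image_of_maps_to (f := fun b => b / R ^ (k + 1)) ?_ 8 ?_
      |>.trans (le_of_eq (mul_comm _ _))
    · intro b hb
      simp only [bad, Finset.mem_filter] at hb
      exact hb.2.1
    · intro a ha
      obtain ⟨z₁, z₂, hz⟩ := hZ n k l a (by omega) (fun m hm k' hk' l' =>
        (disjoint_cell_of_mem_survivors hR ha hm).mono_right
          fun y hy => Or.inl ⟨k', hk', l', hy⟩)
      refine card_le_of_cell_near_pair hR (n + 1) z₁ z₂ _ ?_
      intro b hb
      simp only [bad, Finset.mem_filter] at hb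
      obtain ⟨⟨-, -, hd⟩, rfl⟩ := hb
      obtain ⟨y, hy, hyZ⟩ := Set.not_disjoint_iff.1 hd
      refine ⟨y, hy, hz y ⟨hyZ, ?_⟩⟩
      have e : n + 1 = (n - k) + (k + 1) := by omega
      rw [e] at hy
      exact cell_add_subset hR _ _ _ hy
  have hbadU : ∀ i ∈ T, (badU i).card ≤ 4 := by
    intro i _
    obtain ⟨z, hz⟩ := hU i
    refine card_le_four_of_cell_near hR (n + 1) z _ ?_
    intro b hb
    simp only [badU, Finset.mem_filter] at hb
    obtain ⟨-, rfl, hd⟩ := hb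
    obtain ⟨y, hy, hyU⟩ := Set.not_disjoint_iff.1 hd
    exact ⟨y, hy, hz y hyU⟩
  have h1 := Finset.card_biUnion_le.trans (Finset.sum_le_sum hbad)
  have h2 := Finset.card_biUnion_le_card_mul T badU 4 hbadU
  have h3 : ∑ x ∈ Finset.range (n + 1) ×ˢ (Finset.univ : Finset ι), 8 * (V (n - x.1)).card =
      8 * Fintype.card ι * ∑ k ∈ Finset.range (n + 1), (V (n - k)).card := by
    rw [Finset.sum_product, Finset.mul_sum]
    refine Finset.sum_congr rfl fun k _ => ?_
    simp [Finset.card_univ]; ring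
  have h4 := Finset.card_le_card hsub
  have h5 := Finset.card_union_le (V (n + 1))
    ((Finset.range (n + 1) ×ˢ Finset.univ).biUnion bad ∪ T.biUnion badU)
  have h6 := Finset.card_union_le ((Finset.range (n + 1) ×ˢ Finset.univ).biUnion bad)
    (T.biUnion badU)
  omega

lemma exists_mem_forall_notMem_of_growth {ι : Type*} [Fintype ι] {R : ℕ}
    (Z : ℕ → ℕ → ι → Set ℝ) (U : ℕ → Set ℝ) (lev : ℕ → ℕ)
    (hZ : ∀ n k l a, k ≤ n →
      (∀ m < n - k, ∀ k' ≤ m, ∀ l', Disjoint (cell R (n - k) a) (Z m k' l')) →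
      ∃ z₁ z₂ : ℝ, ∀ z ∈ Z n k l ∩ cell R (n - k) a,
        |z - z₁| ≤ 1 / (R : ℝ) ^ (n + 1) ∨ |z - z₂| ≤ 1 / (R : ℝ) ^ (n + 1))
    (hU : ∀ i, ∃ z : ℝ, ∀ y ∈ U i, |y - z| ≤ 1 / (R : ℝ) ^ (lev i + 1))
    {ρ : ℝ} (hρ : 2 ≤ ρ) (hρR : ρ + 16 * Fintype.card ι + 4 ≤ R)
    (hlev : ∀ n, ∃ T : Finset ℕ, (∀ i, lev i = n → i ∈ T) ∧ (T.card : ℝ) ≤ ρ ^ n) :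
    ∃ y ∈ Set.Icc (0 : ℝ) 1, (∀ n, ∀ k ≤ n, ∀ l, y ∉ Z n k l) ∧ ∀ i, y ∉ U i := by
  have hR : 0 < R := by
    have : (0 : ℝ) < R := by
      have : (0 : ℝ) ≤ Fintype.card ι := by positivity
      linarith
    exact_mod_cast this
  set V := survivors R (removed Z U lev) with hV
  have key : ∀ n, ∀ k ≤ n, ((V (n - k)).card : ℝ) * ρ ^ k ≤ (V n).card := by
    intro n
    induction n with
    | zero => intro k hk; obtain rfl : k = 0 := by omega
              simp
    | succ n ih =>
      obtain ⟨T, hT, hTc⟩ := hlev n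
      have h0 : (1 : ℝ) ≤ ((V 0).card : ℝ) := by simp [hV, survivors]
      have h1 : ρ ^ n ≤ (V n).card := by
        have := ih n le_rfl
        rw [Nat.sub_self] at this
        have h2 : (0 : ℝ) < ρ ^ n := by positivity
        nlinarith
      have hsum : ∑ k ∈ Finset.range (n + 1), ((V (n - k)).card : ℝ) ≤ 2 * (V n).card := by
        have : ∀ k ∈ Finset.range (n + 1),
            ((V (n - k)).card : ℝ) ≤ (1 / 2 : ℝ) ^ k * (V n).card := by
          intro k hk
          have h3 := ih k (by simp at hk; omega)
          have h4 : (2 : ℝ) ^ k ≤ ρ ^ k := by gcongr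
          rw [one_div, inv_pow, inv_mul_eq_div, le_div_iff₀ (by positivity)]
          refine le_trans ?_ h3
          gcongr
        refine (Finset.sum_le_sum this).trans ?_
        rw [← Finset.sum_mul]
        gcongr
        exact sum_geometric_two_le _
      have hmain : (R : ℝ) * (V n).card ≤ (V (n + 1)).card + 8 * Fintype.card ι *
          ∑ k ∈ Finset.range (n + 1), ((V (n - k)).card : ℝ) + 4 * T.card := by
        exact_mod_cast mul_card_survivors_le hR Z U lev hZ hU n T hT
      have hstep : ((V n).card : ℝ) * ρ ≤ (V (n + 1)).card := by
        have h5 : (8 * Fintype.card ι : ℝ) *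
            ∑ k ∈ Finset.range (n + 1), ((V (n - k)).card : ℝ) ≤
            (8 * Fintype.card ι : ℝ) * (2 * (V n).card) := by gcongr
        have h6 : (ρ + 16 * Fintype.card ι + 4) * (V n).card ≤ R * (V n).card := by gcongr
        nlinarith
      intro k hk
      cases k with
      | zero => simp
      | succ k =>
        rw [Nat.add_sub_add_right, pow_succ, ← mul_assoc]
        refine le_trans ?_ hstep
        gcongr
        exact ih k (by omega)
  have hne : ∀ n, (V n).Nonempty := by
    intro n
    have h1 := key n n le_rfl
    rw [Nat.sub_self] at h1
    have h0 : ((V 0).card : ℝ) = 1 := by simp [hV, survivors]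
    rw [h0, one_mul] at h1
    have h2 : (0 : ℝ) < (V n).card := lt_of_lt_of_le (by positivity) h1
    exact Finset.card_pos.1 (by exact_mod_cast h2)
  obtain ⟨y, hy, hyX⟩ := exists_mem_forall_notMem hR hne
  exact ⟨y, hy, fun n k hk l h => hyX n (Or.inl ⟨k, hk, l, h⟩),
    fun i h => hyX (lev i) (Or.inr ⟨i, rfl, h⟩)⟩

open MeasureTheory in
lemma exists_cover_of_hausdorffMeasure_eq_zero {s : ℝ} (hs : 0 < s) {S : Set ℝ}
    (h : μH[s] S = 0) {ε : ℝ} (hε : 0 < ε) :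
    ∃ (U : ℕ → Set ℝ) (W : ℕ → ℝ), S ⊆ ⋃ i, U i ∧ (∀ i, 0 < W i) ∧
      (∀ i, ∀ y ∈ U i, ∀ z ∈ U i, |y - z| ^ s ≤ W i) ∧
      ∀ T : Finset ℕ, ∑ i ∈ T, W i ≤ ε := by
  rw [Measure.hausdorffMeasure_apply] at h
  have h1 := (iSup₂_eq_bot.1 h) ⊤ (by simp)
  have h2 : _ < ENNReal.ofReal (ε / 2) := h1.trans_lt (ENNReal.ofReal_pos.2 (by positivity))
  simp only [iInf_lt_iff] at h2
  obtain ⟨t, hts, -, ht⟩ := h2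
  set d : ℕ → ENNReal := fun i => ⨆ _ : (t i).Nonempty, Metric.ediam (t i) ^ s with hd
  have hdne : ∀ i, d i ≠ ⊤ := fun i =>
    ((ENNReal.le_tsum i).trans_lt (ht.trans ENNReal.ofReal_lt_top)).ne
  refine ⟨t, fun i => (d i).toReal + ε / 4 * (1 / 2) ^ i, hts, fun i => by positivity, ?_, ?_⟩
  · intro i y hy z hz
    have h3 : (edist y z) ^ s ≤ d i := by
      refine le_trans ?_ (le_iSup (fun _ : (t i).Nonempty => Metric.ediam (t i) ^ s) ⟨y, hy⟩)
      exact ENNReal.rpow_le_rpow (Metric.edist_le_ediam_of_mem hy hz) hs.le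
    have h4 := ENNReal.toReal_mono (hdne i) h3
    rw [← ENNReal.toReal_rpow, edist_dist, ENNReal.toReal_ofReal dist_nonneg,
      Real.dist_eq] at h4
    have : 0 < ε / 4 * (1 / 2) ^ i := by positivity
    linarith
  · intro T
    rw [Finset.sum_add_distrib, ← ENNReal.toReal_sum (fun i _ => hdne i), ← Finset.mul_sum]
    have h3 : (∑ i ∈ T, d i).toReal ≤ ε / 2 := by
      rw [← ENNReal.toReal_ofReal (by positivity : 0 ≤ ε / 2)]
      exact ENNReal.toReal_mono ENNReal.ofReal_ne_top ((ENNReal.sum_le_tsum T).trans ht.le)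
    have h4 : ∑ i ∈ T, (1 / 2 : ℝ) ^ i ≤ 2 :=
      (summable_geometric_two.sum_le_tsum T fun i _ => by positivity).trans_eq tsum_geometric_two
    nlinarith

open MeasureTheory in
lemma hausdorffMeasure_ne_zero_of_removal {ι : Type*} [Fintype ι] {R : ℕ}
    (Z : ℕ → ℕ → ι → Set ℝ)
    (hZ : ∀ n k l a, k ≤ n →
      (∀ m < n - k, ∀ k' ≤ m, ∀ l', Disjoint (cell R (n - k) a) (Z m k' l')) →
      ∃ z₁ z₂ : ℝ, ∀ z ∈ Z n k l ∩ cell R (n - k) a,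
        |z - z₁| ≤ 1 / (R : ℝ) ^ (n + 1) ∨ |z - z₂| ≤ 1 / (R : ℝ) ^ (n + 1))
    {s : ℝ} (hs : 0 < s) (hρ : 2 ≤ (R : ℝ) ^ s)
    (hρR : (R : ℝ) ^ s + 16 * Fintype.card ι + 4 ≤ R) :
    μH[s] {y ∈ Set.Icc (0 : ℝ) 1 | ∀ n, ∀ k ≤ n, ∀ l, y ∉ Z n k l} ≠ 0 := by
  intro h
  set ρ := (R : ℝ) ^ s with hρdef
  have hC : (0 : ℝ) ≤ Fintype.card ι := by positivity
  have hR0 : (0 : ℝ) < R := by linarith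
  have hρ0 : 0 < ρ := by linarith
  obtain ⟨U, W, hcov, hW0, hWd, hWs⟩ := exists_cover_of_hausdorffMeasure_eq_zero hs h
    (ε := 1 / ρ ^ 2) (by positivity)
  have hlev : ∀ i, ∃ n : ℕ, (1 / ρ) ^ (n + 2) < W i ∧ W i ≤ (1 / ρ) ^ (n + 1) := by
    intro i
    have h1 : W i ≤ 1 / ρ ^ 2 := by simpa using hWs {i}
    obtain ⟨n, hn1, hn2⟩ := exists_nat_pow_near_of_lt_one (x := W i * ρ) (y := 1 / ρ)
      (mul_pos (hW0 i) hρ0) (by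
        rw [le_div_iff₀ (by positivity)] at h1
        nlinarith [mul_pos (hW0 i) hρ0]) (by positivity) (by
        rw [div_lt_one hρ0]; linarith)
    refine ⟨n, ?_, ?_⟩
    · rw [pow_succ, mul_one_div, div_lt_iff₀ hρ0]; exact hn1
    · rw [pow_succ, mul_one_div, le_div_iff₀ hρ0]; exact hn2
  choose lev hlev1 hlev2 using hlev
  have hcard : ∀ n (T : Finset ℕ), (∀ i ∈ T, lev i = n) → (T.card : ℝ) ≤ ρ ^ n := by
    intro n T hT
    have h1 : (T.card : ℝ) * (1 / ρ) ^ (n + 2) ≤ 1 / ρ ^ 2 := by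
      refine le_trans ?_ (hWs T)
      rw [← nsmul_eq_mul]
      refine Finset.card_nsmul_le_sum _ _ _ fun i hi => ?_
      rw [← hT i hi]; exact (hlev1 i).le
    rw [pow_add, one_div, inv_pow, inv_pow, ← mul_assoc, one_div] at h1
    have h2 := le_of_mul_le_mul_right (h1.trans_eq (one_mul _).symm) (by positivity)
    rwa [← div_eq_mul_inv, div_le_one (by positivity)] at h2
  obtain ⟨y, hy, hyZ, hyU⟩ := exists_mem_forall_notMem_of_growth Z U lev hZ
    (by
      intro i
      rcases (U i).eq_empty_or_nonempty with h0 | ⟨z, hz⟩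
      · exact ⟨0, by simp [h0]⟩
      · refine ⟨z, fun y hy => ?_⟩
        have h1 := (hWd i y hy z hz).trans (hlev2 i)
        have h2 : (1 / ρ) ^ (lev i + 1) = (1 / (R : ℝ) ^ (lev i + 1)) ^ s := by
          rw [Real.div_rpow (by positivity) (by positivity), Real.one_rpow, div_pow, one_pow,
            hρdef, ← Real.rpow_natCast, ← Real.rpow_mul hR0.le, mul_comm,
            Real.rpow_mul hR0.le, Real.rpow_natCast]
        rw [h2] at h1
        exact (Real.rpow_le_rpow_iff (abs_nonneg _) (by positivity) hs).1 h1)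
    hρ hρR
    (by
      intro n
      have hfin : {i | lev i = n}.Finite := by
        by_contra hinf
        obtain ⟨T, hT, hTc⟩ := Set.Infinite.exists_subset_card_eq hinf (⌊ρ ^ n⌋₊ + 1)
        have h1 := hcard n T (fun i hi => hT hi)
        rw [hTc] at h1
        push_cast at h1
        linarith [Nat.lt_floor_add_one (ρ ^ n)]
      refine ⟨hfin.toFinset, fun i hi => by simpa using hi, hcard n _ fun i hi => by simpa using hi⟩)
  obtain ⟨i, hi⟩ := Set.mem_iUnion.1 (hcov ⟨hy, hyZ⟩)
  exact hyU i hi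


/-- `(p / q, r / q)` is a rational point approximating `(θ, y)` too well with weights `α, β`,
and `A X - B Y + C = 0` is a line through it; the height `q B` of the pair is of order `R ^ n`
and `q ^ β / B` is of order `R ^ t`. -/
structure IsCloseWithLine (R θ α β : ℝ) (n t : ℕ) (y : ℝ) (p r q A B C : ℤ) : Prop where
  q_pos : 0 < q
  B_pos : 0 < B
  line : A * p - B * r + C * q = 0
  abs_A_le : |(A : ℝ)| ≤ (q : ℝ) ^ α
  le_height : R ^ n ≤ R ^ 4 * (q * B)
  height_lt : R ^ 4 * (q * B) < R ^ (n + 1)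
  mul_le : B * R ^ t ≤ (q : ℝ) ^ β
  lt_mul : (q : ℝ) ^ β < B * R ^ (t + 1)
  close_left : (q : ℝ) ^ α * |q * θ - p| < 1 / R ^ 7
  close_right : (q : ℝ) ^ β * |q * y - r| < 1 / R ^ 7

lemma rpow_le_mul_rpow {x y K s : ℝ} (hx : 0 ≤ x) (hy : 0 ≤ y) (hK : 1 ≤ K) (hs0 : 0 ≤ s)
    (hs1 : s ≤ 1) (h : x ≤ K * y) : x ^ s ≤ K * y ^ s := by
  calc x ^ s ≤ (K * y) ^ s := Real.rpow_le_rpow hx h hs0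
    _ = K ^ s * y ^ s := Real.mul_rpow (by linarith) hy
    _ ≤ K ^ (1 : ℝ) * y ^ s := by
        gcongr
    _ = K * y ^ s := by rw [Real.rpow_one]

namespace IsCloseWithLine

variable {R θ α β y y₁ y₂ : ℝ} {n t : ℕ} {p r q A B C p₁ r₁ q₁ A₁ B₁ C₁ p₂ r₂ q₂ A₂ B₂ C₂ : ℤ}

lemma one_le_q (h : IsCloseWithLine R θ α β n t y p r q A B C) : (1 : ℝ) ≤ q := by
  exact_mod_cast h.q_pos

lemma one_le_B (h : IsCloseWithLine R θ α β n t y p r q A B C) : (1 : ℝ) ≤ B := by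
  exact_mod_cast h.B_pos

lemma rpow_mul_rpow (h : IsCloseWithLine R θ α β n t y p r q A B C) (hαβ : α + β = 1) :
    (q : ℝ) ^ α * (q : ℝ) ^ β = q := by
  rw [← Real.rpow_add (by linarith [h.one_le_q]), hαβ, Real.rpow_one]

lemma B_le (h : IsCloseWithLine R θ α β n t y p r q A B C) (hR : 1 ≤ R) :
    (B : ℝ) ≤ (q : ℝ) ^ β := by
  refine le_trans ?_ h.mul_le
  have := one_le_pow₀ hR (n := t)
  nlinarith [h.one_le_B]

lemma line_real (h : IsCloseWithLine R θ α β n t y p r q A B C) :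
    (A : ℝ) * p - B * r + C * q = 0 := by exact_mod_cast h.line

lemma q_le (h₁ : IsCloseWithLine R θ α β n t y₁ p₁ r₁ q₁ A₁ B₁ C₁)
    (h₂ : IsCloseWithLine R θ α β n t y₂ p₂ r₂ q₂ A₂ B₂ C₂) (hβ : 0 ≤ β) (hR : 1 ≤ R) :
    (q₂ : ℝ) ≤ R ^ 2 * q₁ := by
  by_contra! hlt
  have hq₁ := h₁.one_le_q
  have hq₂ := h₂.one_le_q
  have hR2 : 1 ≤ R ^ 2 := one_le_pow₀ hR
  have hb : (q₁ : ℝ) ^ β ≤ (q₂ : ℝ) ^ β :=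
    Real.rpow_le_rpow (by linarith) (by nlinarith) hβ
  have hb1 : 0 < (q₁ : ℝ) ^ β := Real.rpow_pos_of_pos (by linarith) _
  have e1 : R ^ n * R ^ t ≤ R ^ 4 * (q₁ * (q₁ : ℝ) ^ β) :=
    calc R ^ n * R ^ t ≤ R ^ 4 * (q₁ * B₁) * R ^ t := by
          gcongr; exact h₁.le_height
      _ = R ^ 4 * (q₁ * (B₁ * R ^ t)) := by ring
      _ ≤ _ := by gcongr; exact h₁.mul_le
  have e2 : R ^ 4 * (q₂ * (q₂ : ℝ) ^ β) < R ^ 2 * (R ^ n * R ^ t) :=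
    calc R ^ 4 * (q₂ * (q₂ : ℝ) ^ β) < R ^ 4 * (q₂ * (B₂ * R ^ (t + 1))) := by
          gcongr; exact h₂.lt_mul
      _ = R ^ 4 * (q₂ * B₂) * R ^ (t + 1) := by ring
      _ ≤ R ^ (n + 1) * R ^ (t + 1) := by gcongr; exact h₂.height_lt.le
      _ = _ := by ring
  have e3 : R ^ 2 * q₁ * (q₁ : ℝ) ^ β ≤ q₂ * (q₂ : ℝ) ^ β := by gcongr
  have e4 : R ^ 2 * (R ^ 4 * (q₁ * (q₁ : ℝ) ^ β)) ≤ R ^ 4 * (q₂ * (q₂ : ℝ) ^ β) :=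
    calc _ = R ^ 4 * (R ^ 2 * q₁ * (q₁ : ℝ) ^ β) := by ring
      _ ≤ _ := by gcongr
  have e5 : R ^ 2 * (R ^ n * R ^ t) ≤ R ^ 2 * (R ^ 4 * (q₁ * (q₁ : ℝ) ^ β)) := by gcongr
  linarith

lemma abs_line_le (h : IsCloseWithLine R θ α β n t y p r q A B C) (hR : 1 ≤ R) :
    q * |A * θ - B * y + C| ≤ 2 / R ^ 7 := by
  have hq := h.one_le_q
  have hB := h.one_le_B
  have e : q * (A * θ - B * y + C) = A * (q * θ - p) - B * (q * y - r) := by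
    linear_combination h.line_real
  calc q * |A * θ - B * y + C| = |q * (A * θ - B * y + C)| := by
        rw [abs_mul, abs_of_nonneg (by linarith : (0 : ℝ) ≤ q)]
    _ ≤ |A * (q * θ - p)| + |B * (q * y - r)| := by rw [e]; exact abs_sub _ _
    _ = |(A : ℝ)| * |q * θ - p| + B * |q * y - r| := by
        rw [abs_mul, abs_mul, abs_of_nonneg (by linarith : (0 : ℝ) ≤ B)]
    _ ≤ (q : ℝ) ^ α * |q * θ - p| + (q : ℝ) ^ β * |q * y - r| := by
        gcongr
        · exact h.abs_A_le
        · exact h.B_le hR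
    _ ≤ 1 / R ^ 7 + 1 / R ^ 7 := add_le_add h.close_left.le h.close_right.le
    _ = 2 / R ^ 7 := by ring

lemma div_height_le (h : IsCloseWithLine R θ α β n t y p r q A B C) (hR : 2 ≤ R) :
    2 / R ^ 7 / (q * B) ≤ 1 / R ^ (n + 1) := by
  have hq := h.one_le_q
  have hB := h.one_le_B
  have h1 := h.le_height
  rw [div_div, div_le_div_iff₀ (by positivity) (by positivity)]
  calc 2 * R ^ (n + 1) = 2 * R * R ^ n := by ring
    _ ≤ R * R * (R ^ 4 * (q * B)) := by gcongr
    _ = R ^ 6 * (q * B) := by ring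
    _ ≤ 1 * (R ^ 7 * (q * B)) := by
      rw [one_mul]; gcongr
      · linarith
      · norm_num

lemma abs_sub_line_le (h : IsCloseWithLine R θ α β n t y p r q A B C) (hR : 2 ≤ R) :
    |y - (A * θ + C) / B| ≤ 1 / R ^ (n + 1) := by
  have hq := h.one_le_q
  have hB := h.one_le_B
  refine le_trans ?_ (h.div_height_le hR)
  rw [le_div_iff₀ (by positivity)]
  refine le_trans (le_of_eq ?_) (h.abs_line_le (by linarith))
  have e : (A : ℝ) * θ - B * y + C = -(B * (y - (A * θ + C) / B)) := by field_simp; ring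
  rw [e, abs_neg, abs_mul, abs_of_nonneg (by linarith : (0 : ℝ) ≤ B)]
  ring

lemma abs_sub_point_le (h : IsCloseWithLine R θ α β n t y p r q A B C) (hR : 2 ≤ R) :
    |y - r / q| ≤ 1 / R ^ (n + 1) := by
  have hq := h.one_le_q
  have hB := h.one_le_B
  refine le_trans ?_ (h.div_height_le hR)
  rw [le_div_iff₀ (by positivity)]
  have e : (q : ℝ) * y - r = q * (y - r / q) := by field_simp
  have h1 := h.close_right.le
  rw [e, abs_mul, abs_of_nonneg (by linarith : (0 : ℝ) ≤ q)] at h1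
  calc |y - r / q| * (q * B) = B * (q * |y - r / q|) := by ring
    _ ≤ (q : ℝ) ^ β * (q * |y - r / q|) := by gcongr; exact h.B_le (by linarith)
    _ ≤ 1 / R ^ 7 := h1
    _ ≤ 2 / R ^ 7 := by gcongr; norm_num

/-- Two points of the same class close to a common short interval lie on each other's lines. -/
lemma line_apply_eq_zero (h₁ : IsCloseWithLine R θ α β n t y₁ p₁ r₁ q₁ A₁ B₁ C₁)
    (h₂ : IsCloseWithLine R θ α β n t y₂ p₂ r₂ q₂ A₂ B₂ C₂) (hα : 0 ≤ α) (hβ : 0 ≤ β)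
    (hαβ : α + β = 1) (hR : 2 ≤ R) (hy : |y₁ - y₂| ≤ 1 / R ^ n) :
    A₁ * p₂ - B₁ * r₂ + C₁ * q₂ = 0 := by
  have hR1 : 1 ≤ R := by linarith
  have hq₁ := h₁.one_le_q
  have hq₂ := h₂.one_le_q
  have hB₁ := h₁.one_le_B
  have hq21 := h₁.q_le h₂ hβ hR1
  have hq12 := h₂.q_le h₁ hβ hR1
  have hR2 : 1 ≤ R ^ 2 := one_le_pow₀ hR1
  have ha : (q₁ : ℝ) ^ α ≤ R ^ 2 * (q₂ : ℝ) ^ α :=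
    rpow_le_mul_rpow (by linarith) (by linarith) hR2 hα (by linarith) hq12
  have hb : (q₁ : ℝ) ^ β ≤ R ^ 2 * (q₂ : ℝ) ^ β :=
    rpow_le_mul_rpow (by linarith) (by linarith) hR2 hβ (by linarith) hq12
  have hBb := h₁.B_le hR1
  set N : ℤ := A₁ * p₂ - B₁ * r₂ + C₁ * q₂ with hN
  have hNr : (N : ℝ) = A₁ * p₂ - B₁ * r₂ + C₁ * q₂ := by rw [hN]; push_cast; ring
  have e : q₁ * (N : ℝ) = A₁ * (q₂ * (q₁ * θ - p₁) - q₁ * (q₂ * θ - p₂)) +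
      B₁ * (q₁ * q₂ * (y₁ - y₂) + q₁ * (q₂ * y₂ - r₂) - q₂ * (q₁ * y₁ - r₁)) := by
    rw [hNr]; linear_combination q₂ * h₁.line_real
  set u₁ := q₁ * θ - p₁
  set u₂ := q₂ * θ - p₂
  set v₁ := q₁ * y₁ - r₁
  set v₂ := q₂ * y₂ - r₂
  have t1 : (q₁ : ℝ) ^ α * (q₂ * |u₁|) ≤ q₁ * (R ^ 2 * (1 / R ^ 7)) :=
    calc (q₁ : ℝ) ^ α * (q₂ * |u₁|) = q₂ * ((q₁ : ℝ) ^ α * |u₁|) := by ring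
      _ ≤ (R ^ 2 * q₁) * (1 / R ^ 7) := by gcongr; exact h₁.close_left.le
      _ = _ := by ring
  have t2 : (q₁ : ℝ) ^ α * (q₁ * |u₂|) ≤ q₁ * (R ^ 2 * (1 / R ^ 7)) :=
    calc (q₁ : ℝ) ^ α * (q₁ * |u₂|) ≤ (R ^ 2 * (q₂ : ℝ) ^ α) * (q₁ * |u₂|) := by gcongr
      _ = q₁ * (R ^ 2 * ((q₂ : ℝ) ^ α * |u₂|)) := by ring
      _ ≤ _ := by gcongr; exact h₂.close_left.le
  have t3 : B₁ * (q₁ * q₂ * |y₁ - y₂|) ≤ q₁ * (1 / R) :=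
    calc B₁ * (q₁ * q₂ * |y₁ - y₂|) ≤ B₁ * (q₁ * (R ^ 2 * q₁) * (1 / R ^ n)) := by gcongr
      _ = q₁ * (R ^ 4 * (q₁ * B₁) * (1 / (R ^ 2 * R ^ n))) := by field_simp
      _ ≤ q₁ * (R ^ (n + 1) * (1 / (R ^ 2 * R ^ n))) := by gcongr; exact h₁.height_lt.le
      _ = q₁ * (1 / R) := by field_simp; ring
  have t4 : B₁ * (q₁ * |v₂|) ≤ q₁ * (R ^ 2 * (1 / R ^ 7)) :=
    calc B₁ * (q₁ * |v₂|) ≤ (R ^ 2 * (q₂ : ℝ) ^ β) * (q₁ * |v₂|) := by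
          gcongr; exact hBb.trans hb
      _ = q₁ * (R ^ 2 * ((q₂ : ℝ) ^ β * |v₂|)) := by ring
      _ ≤ _ := by gcongr; exact h₂.close_right.le
  have t5 : B₁ * (q₂ * |v₁|) ≤ q₁ * (R ^ 2 * (1 / R ^ 7)) :=
    calc B₁ * (q₂ * |v₁|) ≤ (q₁ : ℝ) ^ β * ((R ^ 2 * q₁) * |v₁|) := by gcongr
      _ = q₁ * (R ^ 2 * ((q₁ : ℝ) ^ β * |v₁|)) := by ring
      _ ≤ _ := by gcongr; exact h₁.close_right.le
  have hq0 : (0 : ℝ) ≤ q₁ := by linarith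
  have hq0' : (0 : ℝ) ≤ q₂ := by linarith
  have hB0 : (0 : ℝ) ≤ B₁ := by linarith
  have habs : q₁ * |(N : ℝ)| ≤ (q₁ : ℝ) ^ α * (q₂ * |u₁| + q₁ * |u₂|) +
      B₁ * (q₁ * q₂ * |y₁ - y₂| + q₁ * |v₂| + q₂ * |v₁|) := by
    have h1 : q₁ * |(N : ℝ)| = |q₁ * (N : ℝ)| := by rw [abs_mul, abs_of_nonneg hq0]
    have h2 : |q₂ * u₁ - q₁ * u₂| ≤ q₂ * |u₁| + q₁ * |u₂| := by
      refine (abs_sub _ _).trans_eq ?_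
      rw [abs_mul, abs_mul, abs_of_nonneg hq0, abs_of_nonneg hq0']
    have h3 : |q₁ * q₂ * (y₁ - y₂) + q₁ * v₂ - q₂ * v₁| ≤
        q₁ * q₂ * |y₁ - y₂| + q₁ * |v₂| + q₂ * |v₁| := by
      refine (abs_sub _ _).trans ?_
      refine (add_le_add_left (abs_add_le _ _) _).trans_eq ?_
      simp only [abs_mul, abs_of_nonneg hq0, abs_of_nonneg hq0']
    rw [h1, e]
    refine (abs_add_le _ _).trans ?_
    rw [abs_mul, abs_mul, abs_of_nonneg hB0]
    gcongr
    exact h₁.abs_A_le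
  have hlt : |(N : ℝ)| < 1 := by
    have h6 : q₁ * |(N : ℝ)| ≤ q₁ * (4 * (R ^ 2 * (1 / R ^ 7)) + 1 / R) := by linarith
    refine (le_of_mul_le_mul_left h6 (by linarith)).trans_lt ?_
    have h7 : 4 * (R ^ 2 * (1 / R ^ 7)) + 1 / R = (4 / R ^ 4 + 1) / R := by field_simp
    rw [h7, div_lt_one (by linarith)]
    have h8 : (2 : ℝ) ^ 4 ≤ R ^ 4 := by gcongr
    have h9 : 4 / R ^ 4 ≤ 1 / 4 := by
      rw [div_le_div_iff₀ (by positivity) (by norm_num)]; linarith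
    linarith
  have : |N| < 1 := by exact_mod_cast hlt
  exact Int.abs_lt_one_iff.1 this

/-- Points of the same class close to an interval of length `R ^ (-n)` only affect a bounded
part of it. -/
lemma near_line_or_point (h₁ : IsCloseWithLine R θ α β n t y₁ p₁ r₁ q₁ A₁ B₁ C₁)
    (h₂ : IsCloseWithLine R θ α β n t y₂ p₂ r₂ q₂ A₂ B₂ C₂) (hα : 0 ≤ α) (hβ : 0 ≤ β)
    (hαβ : α + β = 1) (hR : 2 ≤ R) (hy : |y₁ - y₂| ≤ 1 / R ^ n) :
    |y₂ - (A₁ * θ + C₁) / B₁| ≤ 1 / R ^ (n + 1) ∨ |y₂ - r₁ / q₁| ≤ 1 / R ^ (n + 1) := by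
  have h12 : (A₁ : ℝ) * p₂ - B₁ * r₂ + C₁ * q₂ = 0 := by
    exact_mod_cast h₁.line_apply_eq_zero h₂ hα hβ hαβ hR hy
  have h21 : (A₂ : ℝ) * p₁ - B₂ * r₁ + C₂ * q₁ = 0 := by
    exact_mod_cast h₂.line_apply_eq_zero h₁ hα hβ hαβ hR (by rwa [abs_sub_comm])
  have h11 := h₁.line_real
  have h22 := h₂.line_real
  have hq₁ := h₁.one_le_q
  have hq₂ := h₂.one_le_q
  have hB₁ := h₁.one_le_B
  have hB₂ := h₂.one_le_B
  by_cases hD : (A₁ : ℝ) * B₂ - A₂ * B₁ = 0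
  · left
    have hE : (C₁ : ℝ) * B₂ - C₂ * B₁ = 0 := by
      have : (q₁ : ℝ) * (C₁ * B₂ - C₂ * B₁) = 0 := by
        linear_combination B₂ * h11 - B₁ * h21 - p₁ * hD
      rcases mul_eq_zero.1 this with h | h
      · linarith
      · exact h
    have e : (A₁ * θ + C₁) / B₁ = (A₂ * θ + C₂) / (B₂ : ℝ) := by
      rw [div_eq_div_iff (by positivity) (by positivity)]
      linear_combination θ * hD + hE
    rw [e]
    exact h₂.abs_sub_line_le hR
  · right
    have e : (r₁ : ℝ) / q₁ = r₂ / q₂ := by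
      rw [div_eq_div_iff (by positivity) (by positivity)]
      refine mul_left_cancel₀ hD ?_
      linear_combination A₂ * q₂ * h11 - A₁ * q₂ * h21 - A₂ * q₁ * h12 + A₁ * q₁ * h22
    rw [e]
    exact h₂.abs_sub_point_le hR

set_option maxHeartbeats 1000000 in
/-- If `t` is large then two points of the same class close to an interval of length `R ^ (k - n)`
have the same line, unless the lines meet in a point of smaller height that is close as well. -/
lemma same_line_or_exists_close (h₁ : IsCloseWithLine R θ α β n t y₁ p₁ r₁ q₁ A₁ B₁ C₁)
    (h₂ : IsCloseWithLine R θ α β n t y₂ p₂ r₂ q₂ A₂ B₂ C₂) (hα : 0 ≤ α) (hβ : 0 ≤ β)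
    (hαβ : α + β = 1) (hR : 2 ≤ R) {k : ℕ} (hk : k + 11 ≤ t) (hkβ : (k : ℝ) + 11 ≤ t * β)
    (hy : |y₁ - y₂| ≤ R ^ k / R ^ n) :
    (A₁ * θ + C₁) / B₁ = (A₂ * θ + C₂) / (B₂ : ℝ) ∨
      ∃ p r q : ℤ, 0 < q ∧ (q : ℝ) ^ α * |q * θ - p| < 1 / R ^ 7 ∧
        (q : ℝ) ^ β * |q * y₁ - r| < 1 / R ^ 7 ∧ R ^ k * (R ^ 4 * (q * (q : ℝ) ^ β)) < R ^ n := by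
  have hR1 : 1 ≤ R := by linarith
  have hq₁ := h₁.one_le_q
  have hq₂ := h₂.one_le_q
  have hB₁ := h₁.one_le_B
  have hB₂ := h₂.one_le_B
  have hB0₁ : (0 : ℝ) ≤ B₁ := by linarith
  have hB0₂ : (0 : ℝ) ≤ B₂ := by linarith
  have hq21 := h₁.q_le h₂ hβ hR1
  have hq12 := h₂.q_le h₁ hβ hR1
  have hR2 : 1 ≤ R ^ 2 := one_le_pow₀ hR1
  have ha : (q₂ : ℝ) ^ α ≤ R ^ 2 * (q₁ : ℝ) ^ α :=
    rpow_le_mul_rpow (by linarith) (by linarith) hR2 hα (by linarith) hq21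
  have hb : (q₂ : ℝ) ^ β ≤ R ^ 2 * (q₁ : ℝ) ^ β :=
    rpow_le_mul_rpow (by linarith) (by linarith) hR2 hβ (by linarith) hq21
  have hab := h₁.rpow_mul_rpow hαβ
  have ha1 : 1 ≤ (q₁ : ℝ) ^ α := Real.one_le_rpow hq₁ hα
  have hb1 : 1 ≤ (q₁ : ℝ) ^ β := Real.one_le_rpow hq₁ hβ
  have hA₁ := h₁.abs_A_le
  have hA₂ := h₂.abs_A_le
  have hm₁ := h₁.mul_le
  have hm₂ := h₂.mul_le
  have hlt₁ := h₁.lt_mul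
  have hH₁ := h₁.height_lt
  have hH₂ := h₂.height_lt
  have hl₁ := h₁.abs_line_le hR1
  have hl₂ := h₂.abs_line_le hR1
  set a₁ := (q₁ : ℝ) ^ α with ha₁def
  set b₁ := (q₁ : ℝ) ^ β with hb₁def
  set a₂ := (q₂ : ℝ) ^ α
  set b₂ := (q₂ : ℝ) ^ β
  set T := R ^ t with hT
  have hT0 : 0 < T := by positivity
  have ha0 : 0 < a₁ := by linarith
  have hb0 : 0 < b₁ := by linarith
  have hB₁' : B₁ ≤ b₁ / T := (le_div_iff₀ hT0).2 hm₁
  have hB₂' : B₂ ≤ R ^ 2 * b₁ / T := (le_div_iff₀ hT0).2 (hm₂.trans hb)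
  have haB₁ : a₁ * B₁ ≤ q₁ / T := by
    calc a₁ * B₁ ≤ a₁ * (b₁ / T) := by gcongr
      _ = q₁ / T := by rw [← hab]; ring
  have haB₂ : a₁ * B₂ ≤ R ^ 2 * q₁ / T := by
    calc a₁ * B₂ ≤ a₁ * (R ^ 2 * b₁ / T) := by gcongr
      _ = R ^ 2 * q₁ / T := by rw [← hab]; ring
  set l₁ := |A₁ * θ - B₁ * y₁ + C₁|
  have hl₁' : l₁ ≤ 2 / R ^ 7 / q₁ := (le_div_iff₀ (by linarith)).2 (by linarith)
  have hl₂' : |A₂ * θ - B₂ * y₁ + C₂| ≤ 2 / R ^ 7 / q₂ + B₂ * (R ^ k / R ^ n) := by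
    have e : A₂ * θ - B₂ * y₁ + C₂ = (A₂ * θ - B₂ * y₂ + C₂) + -(B₂ * (y₁ - y₂)) := by ring
    rw [e]
    refine (abs_add_le _ _).trans ?_
    rw [abs_neg, abs_mul, abs_of_nonneg hB0₂]
    gcongr
    exact (le_div_iff₀ (by linarith)).2 (by linarith)
  set l₂ := |A₂ * θ - B₂ * y₁ + C₂|
  have hl0₁ : 0 ≤ l₁ := abs_nonneg _
  have hl0₂ : 0 ≤ l₂ := abs_nonneg _
  set D : ℤ := A₁ * B₂ - A₂ * B₁ with hD
  set E : ℤ := C₁ * B₂ - C₂ * B₁ with hE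
  set F : ℤ := A₂ * C₁ - A₁ * C₂ with hF
  have hDr : (D : ℝ) = A₁ * B₂ - A₂ * B₁ := by rw [hD]; push_cast; ring
  have hEr : (E : ℝ) = C₁ * B₂ - C₂ * B₁ := by rw [hE]; push_cast; ring
  have hFr : (F : ℝ) = A₂ * C₁ - A₁ * C₂ := by rw [hF]; push_cast; ring
  have hsmall : 4 * (1 / R ^ 5) + 1 / R ≤ 1 := by
    have h8 : (2 : ℝ) ^ 5 ≤ R ^ 5 := by gcongr
    have h9 : 1 / R ^ 5 ≤ 1 / 2 ^ 5 := by gcongr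
    have h10 : 1 / R ≤ 1 / 2 := by gcongr
    linarith
  have hRk : 1 ≤ R ^ k := one_le_pow₀ hR1
  have hsmallk : 4 * (1 / R ^ 5) + R ^ k * (1 / R) ≤ R ^ k := by
    have : 0 < 1 / R ^ 5 := by positivity
    nlinarith
  have hX : a₁ * |D * θ + E| ≤ R ^ k / T := by
    have e : (D : ℝ) * θ + E =
        B₂ * (A₁ * θ - B₁ * y₁ + C₁) - B₁ * (A₂ * θ - B₂ * y₁ + C₂) := by
      rw [hDr, hEr]; ring
    have h3 : |(D : ℝ) * θ + E| ≤ B₂ * l₁ + B₁ * l₂ := by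
      rw [e]
      refine (abs_sub _ _).trans_eq ?_
      rw [abs_mul, abs_mul, abs_of_nonneg hB0₁, abs_of_nonneg hB0₂]
    have t1 : a₁ * (B₂ * l₁) ≤ 2 * (1 / R ^ 5) / T :=
      calc a₁ * (B₂ * l₁) = (a₁ * B₂) * l₁ := by ring
        _ ≤ (R ^ 2 * q₁ / T) * (2 / R ^ 7 / q₁) := by gcongr
        _ = _ := by field_simp
    have t2 : a₁ * (B₁ * (2 / R ^ 7 / q₂)) ≤ 2 * (1 / R ^ 5) / T :=
      calc a₁ * (B₁ * (2 / R ^ 7 / q₂)) = (a₁ * B₁) * (2 / R ^ 7 / q₂) := by ring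
        _ ≤ (q₁ / T) * (2 / R ^ 7 / q₂) := by gcongr
        _ ≤ (R ^ 2 * q₂ / T) * (2 / R ^ 7 / q₂) := by gcongr
        _ = _ := by field_simp
    have t3 : a₁ * (B₁ * (B₂ * (R ^ k / R ^ n))) ≤ R ^ k * (1 / R) / T :=
      calc a₁ * (B₁ * (B₂ * (R ^ k / R ^ n))) = (a₁ * B₂) * (B₁ * (R ^ k / R ^ n)) := by ring
        _ ≤ (R ^ 2 * q₁ / T) * (B₁ * (R ^ k / R ^ n)) := by gcongr
        _ = (R ^ 4 * (q₁ * B₁)) * (R ^ k / R ^ n / R ^ 2 / T) := by field_simp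
        _ ≤ R ^ (n + 1) * (R ^ k / R ^ n / R ^ 2 / T) := by gcongr
        _ = _ := by field_simp; ring
    calc a₁ * |D * θ + E| ≤ a₁ * (B₂ * l₁ + B₁ * (2 / R ^ 7 / q₂ + B₂ * (R ^ k / R ^ n))) := by
          gcongr; exact h3.trans (by gcongr)
      _ ≤ (4 * (1 / R ^ 5) + R ^ k * (1 / R)) / T := by
          rw [add_div]
          have : 4 * (1 / R ^ 5) / T = 2 * (1 / R ^ 5) / T + 2 * (1 / R ^ 5) / T := by ring
          rw [this]; linarith
      _ ≤ R ^ k / T := by gcongr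
  by_cases hD0 : D = 0
  · left
    have hTk : R ^ k < T := pow_lt_pow_right₀ (by linarith) (by omega)
    have hE1 : |(E : ℝ)| < 1 := by
      rw [hD0, Int.cast_zero, zero_mul, zero_add] at hX
      have h4 : R ^ k / T < 1 := (div_lt_one hT0).2 hTk
      nlinarith [abs_nonneg (E : ℝ)]
    have hE0 : E = 0 := Int.abs_lt_one_iff.1 (by exact_mod_cast hE1)
    have hD0r : (A₁ : ℝ) * B₂ - A₂ * B₁ = 0 := by rw [← hDr, hD0]; simp
    have hE0r : (C₁ : ℝ) * B₂ - C₂ * B₁ = 0 := by rw [← hEr, hE0]; simp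
    rw [div_eq_div_iff (by positivity) (by positivity)]
    linear_combination θ * hD0r + hE0r
  · right
    have hY : b₁ * |D * y₁ + F| ≤ R ^ k := by
      have e : (D : ℝ) * y₁ + F =
          A₂ * (A₁ * θ - B₁ * y₁ + C₁) - A₁ * (A₂ * θ - B₂ * y₁ + C₂) := by
        rw [hDr, hFr]; ring
      have h3 : |(D : ℝ) * y₁ + F| ≤ R ^ 2 * a₁ * l₁ + a₁ * l₂ := by
        rw [e]
        refine (abs_sub _ _).trans ?_
        rw [abs_mul, abs_mul]
        gcongr
        exact hA₂.trans ha
      have t1 : b₁ * (R ^ 2 * a₁ * l₁) ≤ 2 * (1 / R ^ 5) :=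
        calc b₁ * (R ^ 2 * a₁ * l₁) = R ^ 2 * (a₁ * b₁) * l₁ := by ring
          _ ≤ R ^ 2 * q₁ * (2 / R ^ 7 / q₁) := by rw [hab]; gcongr
          _ = _ := by field_simp
      have t2 : b₁ * (a₁ * (2 / R ^ 7 / q₂)) ≤ 2 * (1 / R ^ 5) :=
        calc b₁ * (a₁ * (2 / R ^ 7 / q₂)) = (a₁ * b₁) * (2 / R ^ 7 / q₂) := by ring
          _ ≤ (R ^ 2 * q₂) * (2 / R ^ 7 / q₂) := by rw [hab]; gcongr
          _ = _ := by field_simp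
      have t3 : b₁ * (a₁ * (B₂ * (R ^ k / R ^ n))) ≤ R ^ k * (1 / R) :=
        calc b₁ * (a₁ * (B₂ * (R ^ k / R ^ n))) = (a₁ * b₁) * (B₂ * (R ^ k / R ^ n)) := by ring
          _ ≤ (R ^ 2 * q₂) * (B₂ * (R ^ k / R ^ n)) := by rw [hab]; gcongr
          _ = (R ^ 4 * (q₂ * B₂)) * (R ^ k / R ^ n / R ^ 2) := by field_simp
          _ ≤ R ^ (n + 1) * (R ^ k / R ^ n / R ^ 2) := by gcongr
          _ = _ := by field_simp; ring
      calc b₁ * |D * y₁ + F|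
          ≤ b₁ * (R ^ 2 * a₁ * l₁ + a₁ * (2 / R ^ 7 / q₂ + B₂ * (R ^ k / R ^ n))) := by
            gcongr; exact h3.trans (by gcongr)
        _ ≤ 4 * (1 / R ^ 5) + R ^ k * (1 / R) := by linarith
        _ ≤ R ^ k := hsmallk
    have hQ : |(D : ℝ)| ≤ R ^ 3 * (q₁ / T) :=
      calc |(D : ℝ)| ≤ |(A₁ : ℝ)| * B₂ + |(A₂ : ℝ)| * B₁ := by
            rw [hDr]
            refine (abs_sub _ _).trans_eq ?_
            rw [abs_mul, abs_mul, abs_of_nonneg hB0₁, abs_of_nonneg hB0₂]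
        _ ≤ a₁ * B₂ + (R ^ 2 * a₁) * B₁ := by
            gcongr
            exact hA₂.trans ha
        _ ≤ R ^ 2 * q₁ / T + R ^ 2 * (q₁ / T) := by
            rw [mul_assoc]; gcongr
        _ = 2 * R ^ 2 * (q₁ / T) := by ring
        _ ≤ R * R ^ 2 * (q₁ / T) := by gcongr
        _ = _ := by ring
    have hR3 : 1 ≤ R ^ 3 := one_le_pow₀ hR1
    have hQα : |(D : ℝ)| ^ α ≤ R ^ 3 * a₁ := by
      refine rpow_le_mul_rpow (abs_nonneg _) (by linarith) hR3 hα (by linarith) (hQ.trans ?_)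
      gcongr
      exact div_le_self (by linarith) (one_le_pow₀ hR1)
    have hTk : R ^ k * R ^ 11 ≤ T := by
      rw [← pow_add]; exact pow_le_pow_right₀ hR1 hk
    have hTβ : R ^ k * R ^ 11 ≤ T ^ β := by
      rw [← pow_add, ← Real.rpow_natCast, hT, ← Real.rpow_natCast R t, ← Real.rpow_mul (by linarith)]
      exact Real.rpow_le_rpow_of_exponent_le hR1 (by push_cast; exact hkβ)
    have hQβ : |(D : ℝ)| ^ β ≤ R ^ 3 * (b₁ / (R ^ k * R ^ 11)) := by
      refine (rpow_le_mul_rpow (abs_nonneg _) (by positivity) hR3 hβ (by linarith) hQ).trans ?_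
      rw [Real.div_rpow (by linarith) hT0.le]
      gcongr
    have hlast : 1 / R ^ 8 < 1 / R ^ 7 :=
      one_div_lt_one_div_of_lt (by positivity) (pow_lt_pow_right₀ (by linarith) (by norm_num))
    have hDabs : ((|D| : ℤ) : ℝ) = |(D : ℝ)| := by push_cast; rfl
    have hsign : ∀ x : ℝ, ∀ G : ℤ,
        |((|D| : ℤ) : ℝ) * x - ((-(D.sign * G) : ℤ) : ℝ)| = |D * x + G| := by
      intro x G
      rcases lt_or_gt_of_ne hD0 with h | h
      · rw [abs_of_neg h, Int.sign_eq_neg_one_of_neg h, ← abs_neg]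
        congr 1; push_cast; ring
      · rw [abs_of_pos h, Int.sign_eq_one_of_pos h]
        congr 1; push_cast; ring
    refine ⟨-(D.sign * E), -(D.sign * F), |D|, abs_pos.2 hD0, ?_, ?_, ?_⟩
    · rw [hsign, hDabs]
      calc |(D : ℝ)| ^ α * |D * θ + E| ≤ (R ^ 3 * a₁) * |D * θ + E| := by gcongr
        _ = R ^ 3 * (a₁ * |D * θ + E|) := by ring
        _ ≤ R ^ 3 * (R ^ k / (R ^ k * R ^ 11)) := by
            gcongr
            exact hX.trans (by gcongr)
        _ = 1 / R ^ 8 := by field_simp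
        _ < 1 / R ^ 7 := hlast
    · rw [hsign, hDabs]
      calc |(D : ℝ)| ^ β * |D * y₁ + F|
          ≤ (R ^ 3 * (b₁ / (R ^ k * R ^ 11))) * |D * y₁ + F| := by gcongr
        _ = R ^ 3 / (R ^ k * R ^ 11) * (b₁ * |D * y₁ + F|) := by ring
        _ ≤ R ^ 3 / (R ^ k * R ^ 11) * R ^ k := by gcongr
        _ = 1 / R ^ 8 := by field_simp
        _ < 1 / R ^ 7 := hlast
    · rw [hDabs]
      calc R ^ k * (R ^ 4 * (|(D : ℝ)| * |(D : ℝ)| ^ β))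
          ≤ R ^ k * (R ^ 4 * ((R ^ 3 * (q₁ / T)) * (R ^ 3 * (b₁ / (R ^ k * R ^ 11))))) := by
            gcongr
        _ = q₁ * b₁ / (R * T) := by field_simp
        _ < q₁ * (B₁ * R ^ (t + 1)) / (R * T) := by gcongr
        _ = q₁ * B₁ := by rw [pow_succ, ← hT]; field_simp
        _ = R ^ 4 * (q₁ * B₁) / R ^ 4 := by field_simp
        _ ≤ R ^ (n + 1) / R ^ 4 := by gcongr
        _ = R ^ n / R ^ 3 := by field_simp; ring
        _ ≤ R ^ n := div_le_self (by positivity) hR3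

end IsCloseWithLine

/-- Through every rational point `(p / q, r / q)` there is a line with small coefficients. -/
lemma exists_line_through {α β : ℝ} (hαβ : α + β = 1) (p r q : ℤ) (hq : 0 < q) :
    ∃ A B C : ℤ, (A ≠ 0 ∨ B ≠ 0) ∧ |(A : ℝ)| ≤ (q : ℝ) ^ α ∧ |(B : ℝ)| ≤ (q : ℝ) ^ β ∧
      A * p - B * r + C * q = 0 := by
  have hq' : (0 : ℝ) < q := by exact_mod_cast hq
  set a := ⌊(q : ℝ) ^ α⌋₊
  set b := ⌊(q : ℝ) ^ β⌋₊
  have ha : (a : ℝ) ≤ (q : ℝ) ^ α := Nat.floor_le (by positivity)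
  have hb : (b : ℝ) ≤ (q : ℝ) ^ β := Nat.floor_le (by positivity)
  have hcard : (Finset.Ico 0 q).card < (Finset.range (a + 1) ×ˢ Finset.range (b + 1)).card := by
    rw [Finset.card_product, Finset.card_range, Finset.card_range, Int.card_Ico, sub_zero]
    zify
    rw [Int.toNat_of_nonneg hq.le]
    have h1 : (q : ℝ) < ((a : ℝ) + 1) * ((b : ℝ) + 1) :=
      calc (q : ℝ) = (q : ℝ) ^ α * (q : ℝ) ^ β := by
            rw [← Real.rpow_add hq', hαβ, Real.rpow_one]
        _ < _ := by
            apply mul_lt_mul'' (Nat.lt_floor_add_one _) (Nat.lt_floor_add_one _) <;> positivity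
    exact_mod_cast h1
  obtain ⟨x, hx, y, hy, hxy, he⟩ := Finset.exists_ne_map_eq_of_card_lt_of_maps_to hcard
    (f := fun x : ℕ × ℕ => ((x.1 : ℤ) * p - x.2 * r) % q) (by
      intro x _
      simp only [Finset.coe_Ico, Set.mem_Ico]
      exact ⟨Int.emod_nonneg _ hq.ne', Int.emod_lt_of_pos _ hq⟩)
  obtain ⟨C, hC⟩ := Int.ModEq.dvd he
  simp only [Finset.mem_product, Finset.mem_range] at hx hy
  refine ⟨x.1 - y.1, x.2 - y.2, C, ?_, ?_, ?_, ?_⟩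
  · by_contra! h
    exact hxy (Prod.ext (by omega) (by omega))
  · refine le_trans ?_ ha
    have h1 : |((x.1 : ℤ) - y.1)| ≤ a := by rw [abs_le]; omega
    exact_mod_cast h1
  · refine le_trans ?_ hb
    have h1 : |((x.2 : ℤ) - y.2)| ≤ b := by rw [abs_le]; omega
    exact_mod_cast h1
  · linarith

lemma exists_isCloseWithLine {R θ α β c y : ℝ} (hα : 0 ≤ α) (hβ : 0 ≤ β) (hαβ : α + β = 1)
    (hR : 2 ≤ R) (hθ : ∀ q p : ℤ, 0 < q → c ≤ q * |q * θ - p|) (hc : 1 / R ^ 7 ≤ c)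
    {p r q : ℤ} (hq : 0 < q) (hu : (q : ℝ) ^ α * |q * θ - p| < 1 / R ^ 7)
    (hv : (q : ℝ) ^ β * |q * y - r| < 1 / R ^ 7) :
    ∃ (n t : ℕ) (A B C : ℤ), IsCloseWithLine R θ α β n t y p r q A B C ∧ t ≤ n ∧
      R ^ n ≤ R ^ 4 * (q * (q : ℝ) ^ β) := by
  have hq1 : (1 : ℝ) ≤ q := by exact_mod_cast hq
  obtain ⟨A, B, C, hB, hA, hBb, hL⟩ : ∃ A B C : ℤ, 0 < B ∧ |(A : ℝ)| ≤ (q : ℝ) ^ α ∧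
      (B : ℝ) ≤ (q : ℝ) ^ β ∧ A * p - B * r + C * q = 0 := by
    obtain ⟨A, B, C, hAB, hA, hB, hL⟩ := exists_line_through hαβ p r q hq
    rcases lt_trichotomy B 0 with h | h | h
    · refine ⟨-A, -B, -C, by omega, by simpa using hA, ?_, by linarith⟩
      push_cast
      exact (neg_le_abs _).trans hB
    · exfalso
      have hA0 : A ≠ 0 := by simpa [h] using hAB
      subst h
      have hLr : (A : ℝ) * p + C * q = 0 := by
        have : A * p + C * q = 0 := by linarith
        exact_mod_cast this
      have h1 := hθ |A| (-(A.sign * C)) (abs_pos.2 hA0)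
      have h2 : |((|A| : ℤ) : ℝ) * θ - ((-(A.sign * C) : ℤ) : ℝ)| = |A * θ + C| := by
        rcases lt_or_gt_of_ne hA0 with h | h
        · rw [abs_of_neg h, Int.sign_eq_neg_one_of_neg h, ← abs_neg]
          congr 1; push_cast; ring
        · rw [abs_of_pos h, Int.sign_eq_one_of_pos h]
          congr 1; push_cast; ring
      rw [h2, Int.cast_abs] at h1
      have h3 : q * |A * θ + C| = |(A : ℝ)| * |q * θ - p| := by
        rw [← abs_mul, ← abs_of_nonneg (by linarith : (0 : ℝ) ≤ q), ← abs_mul,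
          abs_of_nonneg (by linarith : (0 : ℝ) ≤ q)]
        congr 1; linear_combination hLr
      have h4 : (q : ℝ) ^ α ≤ q := by
        conv_rhs => rw [← Real.rpow_one (q : ℝ)]
        exact Real.rpow_le_rpow_of_exponent_le hq1 (by linarith)
      have h5 : q * c < q * (1 / R ^ 7) :=
        calc q * c ≤ q * (|(A : ℝ)| * |A * θ + C|) := by gcongr
          _ = |(A : ℝ)| * (q * |A * θ + C|) := by ring
          _ = |(A : ℝ)| * (|(A : ℝ)| * |q * θ - p|) := by rw [h3]
          _ ≤ q * ((q : ℝ) ^ α * |q * θ - p|) := by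
              gcongr
              exact hA.trans h4
          _ < q * (1 / R ^ 7) := by gcongr
      exact absurd (lt_of_mul_lt_mul_left h5 (by linarith)) (not_lt.2 hc)
    · exact ⟨A, B, C, h, hA, (le_abs_self _).trans hB, hL⟩
  have hB1 : (1 : ℝ) ≤ B := by exact_mod_cast hB
  have hR4 : 1 ≤ R ^ 4 := one_le_pow₀ (by linarith)
  obtain ⟨n, hn1, hn2⟩ := exists_nat_pow_near (x := R ^ 4 * (q * B)) (y := R)
    (one_le_mul_of_one_le_of_one_le hR4 (one_le_mul_of_one_le_of_one_le hq1 hB1)) (by linarith)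
  obtain ⟨t, ht1, ht2⟩ := exists_nat_pow_near (x := (q : ℝ) ^ β / B) (y := R)
    ((one_le_div (by linarith)).2 hBb) (by linarith)
  rw [le_div_iff₀ (by linarith)] at ht1
  rw [div_lt_iff₀ (by linarith)] at ht2
  refine ⟨n, t, A, B, C, ⟨hq, hB, hL, hA, hn1, hn2, by linarith, by linarith, hu, hv⟩, ?_, ?_⟩
  · have h1 : R ^ t < R ^ (n + 1) :=
      calc R ^ t ≤ R ^ t * B := le_mul_of_one_le_right (by positivity) hB1
        _ ≤ (q : ℝ) ^ β := ht1
        _ ≤ (q : ℝ) ^ (1 : ℝ) := Real.rpow_le_rpow_of_exponent_le hq1 (by linarith)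
        _ = q := Real.rpow_one _
        _ ≤ q * B := le_mul_of_one_le_right (by linarith) hB1
        _ ≤ R ^ 4 * (q * B) := le_mul_of_one_le_left (by nlinarith) hR4
        _ < _ := hn2
    have := (pow_lt_pow_iff_right₀ (by linarith : 1 < R)).1 h1
    omega
  · refine hn1.trans ?_
    gcongr

/-- The points that are too well approximable by rationals of the class determined by
`n` and `t = M * k + l`. -/
def closeSet {r : ℕ} (R θ : ℝ) (α β : Fin r → ℝ) (M n k : ℕ) (x : Fin r × Fin M) : Set ℝ :=
  {y | 0 < β x.1 ∧ ∃ p r q A B C : ℤ,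
    IsCloseWithLine R θ (α x.1) (β x.1) n (M * k + x.2) y p r q A B C}

lemma abs_sub_le_of_mem_cell {R n a : ℕ} {y z : ℝ} (hy : y ∈ cell R n a) (hz : z ∈ cell R n a) :
    |y - z| ≤ 1 / (R : ℝ) ^ n := by
  refine (abs_sub_le_of_le_of_le hy.1 hy.2 hz.1 hz.2).trans_eq ?_
  ring

lemma closeSet_inter_cell_near {r R : ℕ} {θ c : ℝ} {α β : Fin r → ℝ} (hα : ∀ j, 0 ≤ α j)
    (hαβ : ∀ j, α j + β j = 1) (hR : 2 ≤ R)
    (hθ : ∀ q p : ℤ, 0 < q → c ≤ q * |q * θ - p|) (hc : 1 / (R : ℝ) ^ 7 ≤ c)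
    {M : ℕ} (hM : 12 ≤ M) (hMβ : ∀ j, 0 < β j → 12 ≤ M * β j)
    (n k : ℕ) (x : Fin r × Fin M) (a : ℕ) (hk : k ≤ n)
    (hclean : ∀ m < n - k, ∀ k' ≤ m, ∀ x',
      Disjoint (cell R (n - k) a) (closeSet R θ α β M m k' x')) :
    ∃ z₁ z₂ : ℝ, ∀ z ∈ closeSet R θ α β M n k x ∩ cell R (n - k) a,
      |z - z₁| ≤ 1 / (R : ℝ) ^ (n + 1) ∨ |z - z₂| ≤ 1 / (R : ℝ) ^ (n + 1) := by
  have hR' : (2 : ℝ) ≤ R := by exact_mod_cast hR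
  rcases (closeSet R θ α β M n k x ∩ cell R (n - k) a).eq_empty_or_nonempty with h0 | ⟨y₁, h₁, hy₁⟩
  · exact ⟨0, 0, by simp [h0]⟩
  obtain ⟨hβ, p₁, r₁, q₁, A₁, B₁, C₁, h₁⟩ := h₁
  refine ⟨(A₁ * θ + C₁) / B₁, r₁ / q₁, ?_⟩
  rintro y₂ ⟨⟨-, p₂, r₂, q₂, A₂, B₂, C₂, h₂⟩, hy₂⟩
  have hy := abs_sub_le_of_mem_cell hy₁ hy₂
  rcases Nat.eq_zero_or_pos k with rfl | hk0
  · exact h₁.near_line_or_point h₂ (hα _) hβ.le (hαβ _) hR' hy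
  · left
    have hkt : k + 11 ≤ M * k + x.2 := by nlinarith
    have hk0' : (1 : ℝ) ≤ k := by exact_mod_cast hk0
    have hktβ : (k : ℝ) + 11 ≤ ((M * k + x.2 : ℕ) : ℝ) * β x.1 := by
      have h3 := hMβ _ hβ
      have h4 : 0 ≤ ((x.2 : ℕ) : ℝ) * β x.1 := by positivity
      push_cast
      nlinarith
    have hy' : |y₁ - y₂| ≤ (R : ℝ) ^ k / (R : ℝ) ^ n := by
      refine hy.trans_eq ?_
      rw [div_eq_div_iff (by positivity) (by positivity), one_mul, ← pow_add,
        Nat.add_sub_cancel' hk]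
    rcases h₁.same_line_or_exists_close h₂ (hα _) hβ.le (hαβ _) hR' hkt hktβ hy' with
      h | ⟨p, r, q, hq, hu, hv, hh⟩
    · rw [h]; exact h₂.abs_sub_line_le hR'
    · exfalso
      obtain ⟨m, t, A, B, C, h₀, htm, hm⟩ :=
        exists_isCloseWithLine (hα _) hβ.le (hαβ _) hR' hθ hc hq hu hv
      have h3 : (R : ℝ) ^ (k + m) < (R : ℝ) ^ n := by
        rw [pow_add]
        refine lt_of_le_of_lt ?_ hh
        gcongr
      have h4 := (pow_lt_pow_iff_right₀ (by linarith : (1 : ℝ) < R)).1 h3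
      refine Set.disjoint_left.1 (hclean m (by omega) (t / M) ((Nat.div_le_self _ _).trans htm)
        (x.1, ⟨t % M, Nat.mod_lt _ (by omega)⟩)) hy₁ ⟨hβ, p, r, q, A, B, C, ?_⟩
      simpa only [Nat.div_add_mod] using h₀

lemma exists_large_base {s : ℝ} (hs0 : 0 < s) (hs1 : s < 1) {c : ℝ} (hc : 0 < c) (K : ℝ) :
    ∃ R : ℕ, 2 ≤ R ∧ 1 / (R : ℝ) ^ 7 ≤ c ∧ 2 ≤ (R : ℝ) ^ s ∧ (R : ℝ) ^ s + K ≤ R := by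
  have hN := tendsto_natCast_atTop_atTop (R := ℝ)
  have h1 := ((tendsto_rpow_atTop hs0).comp hN).eventually_ge_atTop 2
  have h2 := ((tendsto_rpow_atTop (sub_pos.2 hs1)).comp hN).eventually_ge_atTop 2
  have h3 := hN.eventually_ge_atTop (2 * K)
  have h4 := hN.eventually_ge_atTop (1 / c)
  obtain ⟨R, h1, h2, h3, h4, h5⟩ := (h1.and (h2.and (h3.and (h4.and (eventually_ge_atTop 2))))).exists
  have hR : (2 : ℝ) ≤ R := by exact_mod_cast h5
  simp only [Function.comp] at h1 h2
  refine ⟨R, h5, ?_, h1, ?_⟩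
  · rw [div_le_iff₀ (by positivity)]
    rw [div_le_iff₀ hc] at h4
    have : (R : ℝ) ≤ (R : ℝ) ^ 7 := le_self_pow₀ (by linarith) (by norm_num)
    nlinarith
  · have e : (R : ℝ) ^ s * (R : ℝ) ^ (1 - s) = R := by
      rw [← Real.rpow_add (by linarith), add_sub_cancel, Real.rpow_one]
    nlinarith

/-- Badziahin–Pollington–Velani theorem (Schmidt's conjecture). -/
theorem stmt1 (r : ℕ) (hr : 1 ≤ r) (α β : Fin r → ℝ)
    (hα : ∀ j, 0 ≤ α j ∧ α j ≤ 1) (hβ : ∀ j, 0 ≤ β j ∧ β j ≤ 1)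
    (hαβ : ∀ j, α j + β j = 1) (θ₁ : ℝ)
    (hθ₁ : ∃ c : ℝ, 0 < c ∧ ∀ q : ℕ, 0 < q → c ≤ (q : ℝ) * nint (q * θ₁)) :
    dimH (⋂ j : Fin r, {θ₂ : ℝ | θ₂ ∈ Set.Icc (0 : ℝ) 1 ∧ ∃ δ : ℝ, 0 < δ ∧
      ∀ p : ℕ, 0 < p →
        δ ≤ max ((p : ℝ) ^ (α j) * nint (p * θ₁)) ((p : ℝ) ^ (β j) * nint (p * θ₂))}) = 1 := by
  refine le_antisymm ((dimH_mono (Set.subset_univ _)).trans_eq Real.dimH_univ) ?_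
  obtain ⟨c, hc, hθ⟩ := hθ₁
  have hθ' : ∀ q p : ℤ, 0 < q → c ≤ q * |q * θ₁ - p| := by
    intro q p hq
    lift q to ℕ using hq.le
    refine (hθ q (by exact_mod_cast hq)).trans ?_
    rw [Int.cast_natCast]
    gcongr
    exact round_le _ _
  obtain ⟨M, hM, hMβ⟩ : ∃ M : ℕ, 12 ≤ M ∧ ∀ j, 0 < β j → 12 ≤ M * β j := by
    obtain ⟨M, hM⟩ := (Set.finite_range fun j => 12 / β j).bddAbove
    refine ⟨max 12 ⌈M⌉₊, le_max_left _ _, fun j hj => ?_⟩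
    have h1 : 12 / β j ≤ M := hM ⟨j, rfl⟩
    rw [← div_le_iff₀ hj]
    refine h1.trans ((Nat.le_ceil M).trans ?_)
    exact_mod_cast le_max_right _ _
  refine le_of_forall_lt fun d hd => ?_
  obtain ⟨s, hds, hs1⟩ := ENNReal.lt_iff_exists_nnreal_btwn.1 hd
  refine hds.trans_le ?_
  have hs0 : (0 : ℝ) < s := by
    have : (0 : ENNReal) < s := bot_le.trans_lt hds
    exact_mod_cast this
  have hs1' : (s : ℝ) < 1 := by exact_mod_cast hs1
  obtain ⟨R, hR, hRc, hR2, hRK⟩ := exists_large_base hs0 hs1' hc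
    (16 * (Fintype.card (Fin r × Fin M) : ℝ) + 4)
  have hne := hausdorffMeasure_ne_zero_of_removal (closeSet R θ₁ α β M)
    (closeSet_inter_cell_near (fun j => (hα j).1) hαβ hR hθ' hRc hM hMβ) hs0 hR2 (by linarith)
  refine (le_dimH_of_hausdorffMeasure_ne_zero hne).trans (dimH_mono ?_)
  rintro y ⟨hy, hyZ⟩
  refine Set.mem_iInter.2 fun j => ⟨hy, ?_⟩
  rcases (hβ j).1.eq_or_lt with h0 | hpos
  · refine ⟨c, hc, fun p hp => le_max_of_le_left ?_⟩
    have : α j = 1 := by linarith [hαβ j]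
    rw [this, Real.rpow_one]
    exact hθ p hp
  · have hR' : (2 : ℝ) ≤ R := by exact_mod_cast hR
    refine ⟨1 / (R : ℝ) ^ 7, by positivity, fun p hp => ?_⟩
    by_contra! hlt
    obtain ⟨hu, hv⟩ := max_lt_iff.1 hlt
    obtain ⟨n, t, A, B, C, h, htn, -⟩ := exists_isCloseWithLine (q := (p : ℤ)) (y := y)
      (p := round ((p : ℝ) * θ₁)) (r := round ((p : ℝ) * y)) (hα j).1 hpos.le (hαβ j) hR' hθ' hRc
      (by exact_mod_cast hp) (by simpa [nint] using hu) (by simpa [nint] using hv)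
    refine hyZ n (t / M) ((Nat.div_le_self _ _).trans htn) (j, ⟨t % M, Nat.mod_lt _ (by omega)⟩)
      ⟨hpos, round ((p : ℝ) * θ₁), round ((p : ℝ) * y), (p : ℤ), A, B, C, ?_⟩
    simpa only [Nat.div_add_mod] using h
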